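/- For every finite metric space X, c₁(EMD(X)) = c₁(TC(X)) = c_{1,lin}(TC(X)), where c_{1,lin}(TC(X)) denotes the infimum of distortions over all m ∈ ℕ and all injective linear maps L: TC(X) → ℓ₁^m, the distortion of L being the infimum of D such that ‖μ‖_TC ≤ ‖L(μ)‖₁ ≤ D‖μ‖_TC for all μ (after rescaling). -/

import Mathlib

open Finset MeasureTheory

/-- The transportation cost norm of a zero-total-mass signed measure `μ` (represented as a
function `V → ℝ`) on a finite metric space with distance `d`: the infimum of costs of
transportation plans representing `μ`. -/
noncomputable def TCnorm {V : Type*} [Fintype V] [DecidableEq V]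
    (d : V → V → ℝ) (μ : V → ℝ) : ℝ :=
  sInf { c : ℝ | ∃ (n : ℕ) (a : Fin n → ℝ) (x y : Fin n → V),
    (∀ i, 0 ≤ a i) ∧
    (∀ z : V, μ z = ∑ i, a i * ((if x i = z then (1 : ℝ) else 0) -
      (if y i = z then (1 : ℝ) else 0))) ∧
    c = ∑ i, a i * d (x i) (y i) }

/-- The `L₁`-distortion of a space `M` equipped with a distance function `ρ`:
the infimum of `D ≥ 1` such that there is a measure space `(Ω, ν)` and a map
`f : M → L₁(ν)` with `ρ x y ≤ ‖f x - f y‖₁ ≤ D * ρ x y` for all `x, y`. -/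
noncomputable def c1OfDist {M : Type*} (ρ : M → M → ℝ) : ℝ :=
  sInf { D : ℝ | 1 ≤ D ∧ ∃ (Ω : Type) (_ : MeasurableSpace Ω) (ν : Measure Ω)
    (f : M → Lp ℝ 1 ν), ∀ x y : M,
      ρ x y ≤ dist (f x) (f y) ∧ dist (f x) (f y) ≤ D * ρ x y }

/-- The `L₁`-distortion of the transportation cost space `TC(V, d)`, i.e. of the space of
zero-total-mass signed measures on `V` with the metric induced by the transportation cost
norm. -/
noncomputable def c1TC {V : Type*} [Fintype V] [DecidableEq V] (d : V → V → ℝ) : ℝ :=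
  c1OfDist (fun μ ν : {μ : V → ℝ // ∑ x, μ x = 0} => TCnorm d (fun x => μ.1 x - ν.1 x))

/-- The support of a signed measure given as a function. -/
def msupp {V : Type*} (μ : V → ℝ) : Set V := {x | μ x ≠ 0}

/-- Diameter of a set with respect to a distance function. -/
noncomputable def sDiam {V : Type*} (d : V → V → ℝ) (S : Set V) : ℝ :=
  sSup { c : ℝ | ∃ x ∈ S, ∃ y ∈ S, c = d x y }

/-- Distance between two sets with respect to a distance function. -/
noncomputable def sDist {V : Type*} (d : V → V → ℝ) (S T : Set V) : ℝ :=
  sInf { c : ℝ | ∃ x ∈ S, ∃ y ∈ T, c = d x y }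

/-- The `L₁`-distortion of `EMD(X)`, the space of probability measures on a finite metric
space `X` with the earth mover's distance `EMD(μ,ν) = ‖μ−ν‖_TC`. -/
noncomputable def c1EMD (X : Type) [Fintype X] [DecidableEq X] [MetricSpace X] : ℝ :=
  c1OfDist (fun μ ν : {μ : X → ℝ // (∀ x, 0 ≤ μ x) ∧ ∑ x, μ x = 1} =>
    TCnorm dist (fun x => μ.1 x - ν.1 x))

/-- The infimal distortion over all `m ∈ ℕ` and all injective linear maps
`L : TC(X) → ℓ₁^m`, where the distortion of `L` is (after rescaling) the infimum of `D`
with `‖μ‖_TC ≤ ‖L μ‖₁ ≤ D·‖μ‖_TC` for all `μ ∈ TC(X)`. -/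
noncomputable def c1linTC (X : Type) [Fintype X] [DecidableEq X] [MetricSpace X] : ℝ :=
  sInf { D : ℝ | 1 ≤ D ∧ ∃ (m : ℕ) (L : (X → ℝ) →ₗ[ℝ] (Fin m → ℝ)),
    (∀ μ ν : X → ℝ, ∑ x, μ x = 0 → ∑ x, ν x = 0 → L μ = L ν → μ = ν) ∧
    ∀ μ : X → ℝ, ∑ x, μ x = 0 →
      TCnorm dist μ ≤ ∑ j, |L μ j| ∧ ∑ j, |L μ j| ≤ D * TCnorm dist μ }


/-- Smoothing of a bi-Lipschitz map on the unit ball. -/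
lemma aux_smoothing {E V : Type*} [NormedAddCommGroup E] [NormedSpace ℝ E] [FiniteDimensional ℝ E]
    [NormedAddCommGroup V] [NormedSpace ℝ V] [CompleteSpace V]
    (h : E → V) (D : ℝ) (hD : 0 ≤ D)
    (hup : ∀ x y, ‖x‖ ≤ 1 → ‖y‖ ≤ 1 → ‖h x - h y‖ ≤ D * ‖x - y‖)
    (δ : ℝ) (hδ : 0 < δ) :
    ∃ F : E → V, ContDiff ℝ 1 F ∧
      (∀ x, ‖x‖ < 1 - δ → ‖fderiv ℝ F x‖ ≤ D) ∧
      (∀ x, ‖x‖ < 1 - δ → ‖F x - h x‖ ≤ D * δ) := by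
  classical
  borelize E
  let μ : Measure E := Measure.addHaar
  let r : E → E := fun x => (max 1 ‖x‖)⁻¹ • x
  have hr1 : ∀ x, ‖r x‖ ≤ 1 := by
    intro x
    have h1 : (0:ℝ) < max 1 ‖x‖ := lt_of_lt_of_le one_pos (le_max_left _ _)
    simp only [r, norm_smul, norm_inv, Real.norm_eq_abs, abs_of_pos h1]
    rw [inv_mul_le_iff₀ h1]
    simp
  have hr2 : ∀ x, ‖x‖ ≤ 1 → r x = x := by
    intro x hx
    simp [r, max_eq_left hx]
  have hrc : Continuous r := by
    refine Continuous.smul (Continuous.inv₀ (by fun_prop) ?_) continuous_id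
    intro x
    exact (lt_of_lt_of_le one_pos (le_max_left _ _)).ne'
  have hc : ContinuousOn h (Metric.closedBall 0 1) := by
    have : LipschitzOnWith (Real.toNNReal D) h (Metric.closedBall 0 1) := by
      refine LipschitzOnWith.of_dist_le_mul fun x hx y hy => ?_
      rw [dist_eq_norm, dist_eq_norm, Real.coe_toNNReal _ hD]
      exact hup x y (by simpa using hx) (by simpa using hy)
    exact this.continuousOn
  let g : E → V := fun x => h (r x)
  have hg : Continuous g := hc.comp_continuous hrc (fun x => by simpa using hr1 x)
  have hgh : ∀ x, ‖x‖ ≤ 1 → g x = h x := fun x hx => by simp only [g, hr2 x hx]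
  let φ : ContDiffBump (0 : E) := ⟨δ / 2, δ, by linarith, by linarith⟩
  have hφout : φ.rOut = δ := rfl
  let F : E → V := MeasureTheory.convolution (φ.normed μ) g (ContinuousLinearMap.lsmul ℝ ℝ) μ
  have hFc : ContDiff ℝ 1 F := by
    have := φ.hasCompactSupport_normed (μ := μ)
    exact_mod_cast this.contDiff_convolution_left (n := 1) (ContinuousLinearMap.lsmul ℝ ℝ)
      (φ.contDiff_normed (n := 1)) hg.locallyIntegrable
  have hex : ConvolutionExists (φ.normed μ) g (ContinuousLinearMap.lsmul ℝ ℝ) μ :=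
    HasCompactSupport.convolutionExists_left _ (φ.hasCompactSupport_normed (μ := μ))
      (φ.contDiff_normed (n := 0)).continuous hg.locallyIntegrable
  have hlip : ∀ x y, ‖x‖ < 1 - δ → ‖y‖ < 1 - δ → ‖F x - F y‖ ≤ D * ‖x - y‖ := by
    intro x y hx hy
    have e : F x - F y = ∫ t, φ.normed μ t • (g (x - t) - g (y - t)) ∂μ := by
      simp only [F, MeasureTheory.convolution]
      rw [← integral_sub (hex x) (hex y)]
      simp [smul_sub]
    rw [e]
    have hint : Integrable (fun t => φ.normed μ t * (D * ‖x - y‖)) μ :=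
      φ.integrable_normed.mul_const _
    calc _ ≤ ∫ t, φ.normed μ t * (D * ‖x - y‖) ∂μ := by
          refine norm_integral_le_of_norm_le hint (Filter.Eventually.of_forall fun t => ?_)
          rw [norm_smul, Real.norm_eq_abs, abs_of_nonneg (φ.nonneg_normed t)]
          by_cases ht : t ∈ Function.support (φ.normed μ)
          · rw [φ.support_normed_eq, hφout, mem_ball_zero_iff] at ht
            refine mul_le_mul_of_nonneg_left ?_ (φ.nonneg_normed t)
            have h1 : ‖x - t‖ ≤ 1 := (norm_sub_le _ _).trans (by linarith)
            have h2 : ‖y - t‖ ≤ 1 := (norm_sub_le _ _).trans (by linarith)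
            rw [hgh _ h1, hgh _ h2]
            simpa using hup _ _ h1 h2
          · rw [Function.notMem_support] at ht
            simp [ht]
      _ = D * ‖x - y‖ := by
          rw [integral_mul_const, φ.integral_normed, one_mul]
  refine ⟨F, hFc, fun x hx => ?_, fun x hx => ?_⟩
  · refine norm_fderiv_le_of_lip' ℝ hD ?_
    have : Metric.ball (0:E) (1 - δ) ∈ nhds x := Metric.isOpen_ball.mem_nhds (by simpa using hx)
    filter_upwards [this] with y hy
    exact hlip y x (by simpa using hy) hx
  · have := φ.dist_normed_convolution_le (μ := μ) (g := g) (x₀ := x) (ε := D * δ)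
      hg.aestronglyMeasurable (fun y hy => ?_)
    · rw [dist_eq_norm, hgh x (by linarith)] at this
      exact this
    · rw [hφout, mem_ball_iff_norm] at hy
      have h2 : ‖y‖ ≤ 1 := by
        have := norm_add_le (y - x) x
        rw [sub_add_cancel] at this
        linarith
      rw [hgh x (by linarith), hgh y h2, dist_eq_norm]
      exact (hup _ _ h2 (by linarith)).trans (by gcongr)

/-- Averaging the derivative over a ball. -/
lemma aux_average {E V : Type*} [NormedAddCommGroup E] [NormedSpace ℝ E] [FiniteDimensional ℝ E]
    [MeasurableSpace E] [BorelSpace E] (μ : Measure E) [μ.IsAddHaarMeasure]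
    [NormedAddCommGroup V] [NormedSpace ℝ V] [CompleteSpace V]
    (F : E → V) (hF : ContDiff ℝ 1 F) (v : E) (r c : ℝ)
    (hlow : ∀ x, ‖x‖ < r → c ≤ ‖F (x + v) - F x‖) :
    c * μ.real (Metric.ball 0 r) ≤
      ∫ x in Metric.ball 0 (r + ‖v‖), ‖fderiv ℝ F x v‖ ∂μ := by
  have hFd : Continuous (fderiv ℝ F) := hF.continuous_fderiv (by norm_num)
  have hq : Continuous (fun x => ‖fderiv ℝ F x v‖) := by fun_prop
  have hq2 : Continuous (fun p : ℝ × E => ‖fderiv ℝ F (p.2 + p.1 • v) v‖) := by fun_prop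
  have hint : ∀ R : ℝ, IntegrableOn (fun x => ‖fderiv ℝ F x v‖) (Metric.ball 0 R) μ := fun R =>
    (hq.continuousOn.integrableOn_compact (isCompact_closedBall 0 R)).mono_set
      Metric.ball_subset_closedBall
  have hint2 : Integrable (Function.uncurry fun (t : ℝ) (x : E) => ‖fderiv ℝ F (x + t • v) v‖)
      ((volume.restrict (Set.uIoc 0 1)).prod (μ.restrict (Metric.ball 0 r))) := by
    rw [Measure.prod_restrict]
    have hK : IsCompact (Set.Icc (0:ℝ) 1 ×ˢ Metric.closedBall (0:E) r) :=
      isCompact_Icc.prod (isCompact_closedBall _ _)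
    refine IntegrableOn.mono_set (ContinuousOn.integrableOn_compact hK hq2.continuousOn) ?_
    refine Set.prod_mono ?_ Metric.ball_subset_closedBall
    rw [Set.uIoc_of_le zero_le_one]
    exact Set.Ioc_subset_Icc_self
  have hpt : ∀ x, ‖x‖ < r → c ≤ ∫ t in (0:ℝ)..1, ‖fderiv ℝ F (x + t • v) v‖ := by
    intro x hx
    refine (hlow x hx).trans ?_
    have hc1 : Continuous (fun t : ℝ => fderiv ℝ F (x + t • v) v) := by fun_prop
    have := intervalIntegral.integral_eq_sub_of_hasDerivAt (a := 0) (b := 1)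
      (f := fun t : ℝ => F (x + t • v)) (f' := fun t : ℝ => fderiv ℝ F (x + t • v) v)
      (fun t _ => by
        have h1 : HasDerivAt (fun t : ℝ => x + t • v) v t := by
          simpa using ((hasDerivAt_id t).smul_const v).const_add x
        have h2 : HasFDerivAt F (fderiv ℝ F (x + t • v)) (x + t • v) :=
          (hF.differentiable (by norm_num) _).hasFDerivAt
        exact h2.comp_hasDerivAt t h1)
      (hc1.intervalIntegrable _ _)
    simp only [one_smul, zero_smul, add_zero] at this
    rw [← this]
    exact intervalIntegral.norm_integral_le_integral_norm zero_le_one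
  calc c * μ.real (Metric.ball 0 r) = ∫ x in Metric.ball 0 r, c ∂μ := by
        simp [mul_comm]
    _ ≤ ∫ x in Metric.ball 0 r, (∫ t in (0:ℝ)..1, ‖fderiv ℝ F (x + t • v) v‖) ∂μ := by
        refine setIntegral_mono_on ?_ ?_ measurableSet_ball (fun x hx => hpt x (by simpa using hx))
        · exact integrableOn_const (measure_ball_lt_top.ne)
        · have := hint2.integral_prod_right
          simpa [IntegrableOn, intervalIntegral, Set.uIoc_of_le] using this
    _ = ∫ t in (0:ℝ)..1, (∫ x in Metric.ball 0 r, ‖fderiv ℝ F (x + t • v) v‖ ∂μ) := by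
        rw [intervalIntegral_integral_swap hint2]
    _ ≤ ∫ t in (0:ℝ)..1, (∫ x in Metric.ball 0 (r + ‖v‖), ‖fderiv ℝ F x v‖ ∂μ) := by
        refine intervalIntegral.integral_mono_on zero_le_one ?_ (by simp) ?_
        · have := hint2.integral_prod_left
          rw [intervalIntegrable_iff]
          exact this
        · intro t ht
          have e : ∫ x in Metric.ball 0 r, ‖fderiv ℝ F (x + t • v) v‖ ∂μ =
              ∫ x in Metric.ball (t • v) r, ‖fderiv ℝ F x v‖ ∂μ := by
            have := (measurePreserving_add_right μ (t • v)).setIntegral_preimage_emb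
              (measurableEmbedding_addRight (t • v)) (fun x => ‖fderiv ℝ F x v‖)
              (Metric.ball (t • v) r)
            rw [← this]
            congr 2
            simp [sub_self]
          rw [e]
          refine setIntegral_mono_set (hint _) (Filter.Eventually.of_forall fun x => norm_nonneg _)
            (LE.le.eventuallyLE ?_)
          intro x hx
          rw [mem_ball_iff_norm] at hx
          rw [mem_ball_zero_iff]
          have h1 : ‖t • v‖ ≤ ‖v‖ := by
            rw [norm_smul, Real.norm_eq_abs, abs_of_nonneg ht.1]
            exact mul_le_of_le_one_left (norm_nonneg _) ht.2
          have := norm_add_le (x - t • v) (t • v)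
          rw [sub_add_cancel] at this
          linarith
    _ = _ := by simp

/-- A linear map from a finite-dimensional space to `L₁` is approximately a linear map
to `ℓ₁`. -/
lemma aux_simple {E : Type*} [NormedAddCommGroup E] [NormedSpace ℝ E] [FiniteDimensional ℝ E]
    {Ω : Type*} [MeasurableSpace Ω] (ν : Measure Ω) (L : E →L[ℝ] Lp ℝ 1 ν) (ε : ℝ) (hε : 0 < ε) :
    ∃ (m : ℕ) (T : E →ₗ[ℝ] (Fin m → ℝ)), ∀ v, |∑ j, |T v j| - ‖L v‖| ≤ ε * ‖v‖ := by
  classical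
  let b := Module.finBasis ℝ E
  set k := Module.finrank ℝ E
  -- coordinates
  obtain ⟨C, hC0, hC⟩ : ∃ C > 0, ∀ v, ∑ i, |b.repr v i| ≤ C * ‖v‖ := by
    let A : E →L[ℝ] (Fin k → ℝ) := LinearMap.toContinuousLinearMap b.equivFun.toLinearMap
    refine ⟨k * ‖A‖ + 1, by positivity, fun v => ?_⟩
    calc ∑ i, |b.repr v i| ≤ ∑ i : Fin k, ‖A‖ * ‖v‖ := by
          refine Finset.sum_le_sum fun i _ => ?_
          exact (norm_le_pi_norm (A v) i).trans (A.le_opNorm v)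
      _ = k * ‖A‖ * ‖v‖ := by simp [mul_assoc]
      _ ≤ _ := by nlinarith [norm_nonneg v]
  let H : Ω → (Fin k → ℝ) := fun ω i => L (b i) ω
  have hHi : ∀ i, Integrable (fun ω => H ω i) ν := fun i => L1.integrable_coeFn (L (b i))
  have hH : Integrable H ν := Integrable.of_eval hHi
  obtain ⟨S, hS1, hS2⟩ := (memLp_one_iff_integrable.2 hH).exists_simpleFunc_eLpNorm_sub_lt
    (by simp) (ε := ENNReal.ofReal (ε / C)) (by simp; positivity)
  rw [memLp_one_iff_integrable] at hS2
  have hHS : ∫ ω, ‖H ω - S ω‖ ∂ν ≤ ε / C := by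
    change ∫ ω, ‖(H - S) ω‖ ∂ν ≤ ε / C
    rw [integral_norm_eq_lintegral_enorm (hH.sub hS2).aestronglyMeasurable]
    rw [eLpNorm_one_eq_lintegral_enorm] at hS1
    exact ENNReal.toReal_le_of_le_ofReal (by positivity) hS1.le
  -- linear functional on coordinates
  let ℓ : E → (Fin k → ℝ) → ℝ := fun v c => ∑ i, b.repr v i * c i
  have hℓ : ∀ v c c', |(|ℓ v c| - |ℓ v c'|)| ≤ C * ‖v‖ * ‖c' - c‖ := by
    intro v c c'
    calc _ ≤ |ℓ v c - ℓ v c'| := abs_abs_sub_abs_le_abs_sub _ _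
      _ = |∑ i, b.repr v i * (c i - c' i)| := by
          simp only [ℓ, ← Finset.sum_sub_distrib, mul_sub]
      _ ≤ ∑ i, |b.repr v i| * ‖c' - c‖ := by
          refine (Finset.abs_sum_le_sum_abs _ _).trans (Finset.sum_le_sum fun i _ => ?_)
          rw [abs_mul, norm_sub_rev]
          exact mul_le_mul_of_nonneg_left (norm_le_pi_norm (c - c') i) (abs_nonneg _)
      _ ≤ _ := by
          rw [← Finset.sum_mul]
          exact mul_le_mul_of_nonneg_right (hC v) (norm_nonneg _)
  let T0 : E →ₗ[ℝ] (S.range → ℝ) :=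
    { toFun := fun v c => ν.real (S ⁻¹' {c.1}) * ℓ v c.1
      map_add' := by
        intro v w; funext c
        simp only [ℓ, map_add, Finsupp.add_apply, add_mul, Finset.sum_add_distrib, Pi.add_apply,
          mul_add]
      map_smul' := by
        intro a w; funext c
        simp only [ℓ, map_smul, Finsupp.smul_apply, smul_eq_mul, Pi.smul_apply, RingHom.id_apply,
          mul_assoc, ← Finset.mul_sum]
        ring }
  let e := Fintype.equivFin S.range
  let T : E →ₗ[ℝ] (Fin (Fintype.card S.range) → ℝ) :=
    (LinearMap.funLeft ℝ ℝ e.symm).comp T0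
  refine ⟨_, T, fun v => ?_⟩
  have h1 : ∑ j, |T v j| = ∫ ω, |ℓ v (S ω)| ∂ν := by
    have h2 : ∑ j, |T v j| = ∑ c : S.range, |T0 v c| :=
      Equiv.sum_comp e.symm (fun c => |T0 v c|)
    have h3 := S.map_integral (fun c => |ℓ v c|) hS2 (by simp [ℓ])
    have hint : Integrable (S.map (fun c => |ℓ v c|)) ν := by
      refine (hS2.norm.const_mul (C * ‖v‖)).mono' (SimpleFunc.aestronglyMeasurable _) ?_
      refine Filter.Eventually.of_forall fun ω => ?_
      have := hℓ v (S ω) 0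
      simpa [ℓ] using this
    rw [SimpleFunc.integral_eq_integral _ hint] at h3
    rw [h2]
    simp only [SimpleFunc.coe_map, Function.comp_apply] at h3
    rw [h3, ← Finset.sum_coe_sort S.range]
    refine Finset.sum_congr rfl fun c _ => ?_
    simp only [T0, LinearMap.coe_mk, AddHom.coe_mk, abs_mul, smul_eq_mul, abs_of_nonneg measureReal_nonneg]
  have hae : (L v : Ω → ℝ) =ᵐ[ν] fun ω => ℓ v (H ω) := by
    have e1 : L v = ∑ i, b.repr v i • L (b i) := by
      conv_lhs => rw [← b.sum_repr v]
      rw [map_sum]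
      exact Finset.sum_congr rfl fun i _ => map_smul _ _ _
    have e2 : ∀ s : Finset (Fin k), ((∑ i ∈ s, b.repr v i • L (b i) : Lp ℝ 1 ν) : Ω → ℝ) =ᵐ[ν]
        fun ω => ∑ i ∈ s, b.repr v i * L (b i) ω := by
      intro s
      induction s using Finset.induction_on with
      | empty =>
        simp only [Finset.sum_empty]
        exact Lp.coeFn_zero ℝ 1 ν
      | insert a s ha ih =>
        rw [Finset.sum_insert ha]
        filter_upwards [Lp.coeFn_add (b.repr v a • L (b a)) (∑ i ∈ s, b.repr v i • L (b i)), ih,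
          Lp.coeFn_smul (b.repr v a) (L (b a))] with ω h1 h2 h3
        rw [h1, Pi.add_apply, h2, h3, Finset.sum_insert ha]
        simp
    rw [e1]
    exact e2 _
  have h2 : ‖L v‖ = ∫ ω, |ℓ v (H ω)| ∂ν := by
    rw [L1.norm_eq_integral_norm]
    refine integral_congr_ae ?_
    filter_upwards [hae] with ω h
    rw [h, Real.norm_eq_abs]
  have hi1 : Integrable (fun ω => |ℓ v (S ω)|) ν := by
    have : Integrable (fun ω => ℓ v (S ω)) ν :=
      integrable_finsetSum _ fun i _ => (Integrable.eval hS2 i).const_mul _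
    exact this.abs
  have hi2 : Integrable (fun ω => |ℓ v (H ω)|) ν := by
    have : Integrable (fun ω => ℓ v (H ω)) ν :=
      integrable_finsetSum _ fun i _ => (hHi i).const_mul _
    exact this.abs
  rw [h1, h2, ← integral_sub hi1 hi2]
  calc _ ≤ ∫ ω, C * ‖v‖ * ‖H ω - S ω‖ ∂ν := by
        rw [← Real.norm_eq_abs]
        refine norm_integral_le_of_norm_le (g := fun ω => C * ‖v‖ * ‖H ω - S ω‖)
          ((hH.sub hS2).norm.const_mul _) ?_
        exact Filter.Eventually.of_forall fun ω => hℓ v _ _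
    _ = C * ‖v‖ * ∫ ω, ‖H ω - S ω‖ ∂ν := integral_const_mul _ _
    _ ≤ C * ‖v‖ * (ε / C) := by gcongr
    _ = _ := by field_simp

lemma aux_simple_family {E : Type*} [NormedAddCommGroup E] [NormedSpace ℝ E]
    [FiniteDimensional ℝ E] {ι : Type*} [Fintype ι]
    {Ω : Type*} [MeasurableSpace Ω] (ν : Measure Ω) (L : ι → E →L[ℝ] Lp ℝ 1 ν)
    (ε : ℝ) (hε : 0 < ε) :
    ∃ (m : ℕ) (T : E →ₗ[ℝ] (Fin m → ℝ)), ∀ v, |∑ j, |T v j| - ∑ i, ‖L i v‖| ≤ ε * ‖v‖ := by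
  classical
  have hη : 0 < ε / (Fintype.card ι + 1) := by positivity
  choose m T hT using fun i => aux_simple ν (L i) _ hη
  let e := Fintype.equivFin (Σ i, Fin (m i))
  let T0 : E →ₗ[ℝ] ((Σ i, Fin (m i)) → ℝ) :=
    LinearMap.pi fun p => (LinearMap.proj p.2).comp (T p.1)
  refine ⟨_, (LinearMap.funLeft ℝ ℝ e.symm).comp T0, fun v => ?_⟩
  have h2 : ∑ j, |(LinearMap.funLeft ℝ ℝ e.symm).comp T0 v j| = ∑ c, |T0 v c| :=
    Equiv.sum_comp e.symm (fun c => |T0 v c|)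
  rw [h2, Fintype.sum_sigma, ← Finset.sum_sub_distrib]
  calc _ ≤ ∑ i : ι, ε / (Fintype.card ι + 1) * ‖v‖ :=
        (Finset.abs_sum_le_sum_abs _ _).trans (Finset.sum_le_sum fun i _ => hT i v)
    _ = (Fintype.card ι / (Fintype.card ι + 1) : ℝ) * (ε * ‖v‖) := by
        simp; ring
    _ ≤ 1 * (ε * ‖v‖) := by
        gcongr
        rw [div_le_one (by positivity)]; linarith
    _ = _ := one_mul _

lemma aux_choose (k : ℕ) (D ε : ℝ) (hε : 0 < ε) :
    ∃ s : ℝ, 0 < s ∧ s < 1 / 4 ∧ 1 - ε ≤ ((1 - 3 * s) / (1 - 2 * s)) ^ k * (1 - 2 * D * s) := by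
  have hc : ContinuousAt (fun s : ℝ => ((1 - 3 * s) / (1 - 2 * s)) ^ k * (1 - 2 * D * s)) 0 := by
    refine ContinuousAt.mul (ContinuousAt.pow (ContinuousAt.div (by fun_prop) (by fun_prop)
      (by norm_num)) _) (by fun_prop)
  have h1 : ∀ᶠ s in nhds (0:ℝ), 1 - ε < ((1 - 3 * s) / (1 - 2 * s)) ^ k * (1 - 2 * D * s) := by
    refine hc.eventually (lt_mem_nhds ?_)
    simpa using hε
  have h2 : ∀ᶠ s in nhds (0:ℝ), s < 1 / 4 := gt_mem_nhds (by norm_num)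
  have h3 : ∀ᶠ s in nhdsWithin (0:ℝ) (Set.Ioi 0), 0 < s := self_mem_nhdsWithin
  obtain ⟨s, hs⟩ := (((h1.and h2).filter_mono nhdsWithin_le_nhds).and h3).exists
  exact ⟨s, hs.2, hs.1.2, hs.1.1.le⟩

/-- A bi-Lipschitz map on the unit ball yields a finite family of linear maps. -/
lemma aux_convex {E V : Type*} [NormedAddCommGroup E] [NormedSpace ℝ E] [FiniteDimensional ℝ E]
    [NormedAddCommGroup V] [NormedSpace ℝ V] [CompleteSpace V]
    (h : E → V) (D : ℝ) (hD : 0 ≤ D)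
    (hup : ∀ x y, ‖x‖ ≤ 1 → ‖y‖ ≤ 1 → ‖h x - h y‖ ≤ D * ‖x - y‖)
    (hlow : ∀ x y, ‖x‖ ≤ 1 → ‖y‖ ≤ 1 → ‖x - y‖ ≤ ‖h x - h y‖)
    (P : Finset E) (hP : ∀ p ∈ P, ‖p‖ = 1) (ε : ℝ) (hε : 0 < ε) :
    ∃ (n : ℕ) (L : Fin n → E →L[ℝ] V), (∀ v, ∑ i, ‖L i v‖ ≤ D * ‖v‖) ∧
      ∀ p ∈ P, 1 - ε ≤ ∑ i, ‖L i p‖ := by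
  classical
  borelize E
  let μ : Measure E := Measure.addHaar
  set k := Module.finrank ℝ E with hk
  obtain ⟨s, hs0, hs1, hs⟩ := aux_choose k D (ε / 2) (by positivity)
  have hss : s ^ 2 < s := by nlinarith
  obtain ⟨F, hF, hF1, hF2⟩ := aux_smoothing h D hD hup (s ^ 2) (by positivity)
  have hFd : Continuous (fderiv ℝ F) := hF.continuous_fderiv (by norm_num)
  have hr2 : (0:ℝ) < 1 - 2 * s := by linarith
  have hr1 : (0:ℝ) < 1 - 3 * s := by linarith
  have hμ1 : 0 < μ.real (Metric.ball 0 1) :=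
    ENNReal.toReal_pos (Metric.measure_ball_pos μ _ one_pos).ne' measure_ball_lt_top.ne
  have hμr : ∀ r : ℝ, 0 < r → μ.real (Metric.ball 0 r) = r ^ k * μ.real (Metric.ball 0 1) := by
    intro r hr
    simp only [Measure.real, Measure.addHaar_ball_of_pos μ 0 hr, ENNReal.toReal_mul]
    rw [ENNReal.toReal_ofReal (by positivity)]
  have havg : ∀ p ∈ P, 1 - ε / 2 ≤
      (μ.real (Metric.ball 0 (1 - 2 * s)))⁻¹ *
        ∫ x in Metric.ball 0 (1 - 2 * s), ‖fderiv ℝ F x p‖ ∂μ := by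
    intro p hp
    have hnv : ‖s • p‖ = s := by rw [norm_smul, hP p hp, Real.norm_eq_abs, abs_of_pos hs0, mul_one]
    have key := aux_average μ F hF (s • p) (1 - 3 * s) (s - 2 * D * s ^ 2) (fun x hx => by
      have hxv : ‖x + s • p‖ < 1 - 2 * s := (norm_add_le _ _).trans_lt (by linarith)
      have e1 := hF2 x (by linarith)
      have e2 := hF2 (x + s • p) (by linarith)
      have e3 := hlow (x + s • p) x (by linarith) (by linarith)
      rw [add_sub_cancel_left, hnv] at e3
      have e4 : h (x + s • p) - h x = (F (x + s • p) - F x) - (F (x + s • p) - h (x + s • p))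
          + (F x - h x) := by abel
      have e5 : ‖h (x + s • p) - h x‖ ≤ ‖F (x + s • p) - F x‖ + ‖F (x + s • p) - h (x + s • p)‖
          + ‖F x - h x‖ := by
        rw [e4]
        exact (norm_add_le _ _).trans (by gcongr; exact norm_sub_le _ _)
      linarith)
    rw [hnv, show 1 - 3 * s + s = 1 - 2 * s by ring, hμr _ hr1] at key
    simp only [map_smul, norm_smul, Real.norm_eq_abs, abs_of_pos hs0] at key
    rw [integral_const_mul] at key
    have key2 : (1 - 2 * D * s) * ((1 - 3 * s) ^ k * μ.real (Metric.ball 0 1)) ≤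
        ∫ x in Metric.ball 0 (1 - 2 * s), ‖fderiv ℝ F x p‖ ∂μ := by
      refine le_of_mul_le_mul_left ?_ hs0
      refine le_trans (le_of_eq ?_) key
      ring
    rw [hμr _ hr2, le_inv_mul_iff₀ (by positivity)]
    refine le_trans ?_ key2
    calc _ ≤ (1 - 2 * s) ^ k * μ.real (Metric.ball 0 1) *
          (((1 - 3 * s) / (1 - 2 * s)) ^ k * (1 - 2 * D * s)) := by gcongr
      _ = _ := by rw [div_pow]; field_simp
  let Q : E → (P → ℝ) := fun x p => ‖fderiv ℝ F x p.1‖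
  have hQ : Continuous Q := by
    refine continuous_pi fun p => ?_
    simp only [Q]
    fun_prop
  set B : Set E := Metric.ball 0 (1 - 2 * s)
  have hQi : IntegrableOn Q B μ :=
    (hQ.continuousOn.integrableOn_compact (isCompact_closedBall 0 (1 - 2 * s))).mono_set
      Metric.ball_subset_closedBall
  have hmem : (⨍ x in B, Q x ∂μ) ∈ closure (convexHull ℝ (Q '' B)) := by
    refine Convex.set_average_mem (convex_convexHull ℝ _).closure isClosed_closure
      (Metric.measure_ball_pos μ _ hr2).ne' measure_ball_lt_top.ne ?_ hQi
    refine (ae_restrict_mem measurableSet_ball).mono fun x hx => ?_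
    exact subset_closure (subset_convexHull ℝ _ ⟨x, hx, rfl⟩)
  obtain ⟨y, hy, hyd⟩ := Metric.mem_closure_iff.1 hmem (ε / 2) (by positivity)
  obtain ⟨ι, hι, w, z, hw0, hw1, hz, hwz⟩ := mem_convexHull_iff_exists_fintype.1 hy
  choose x hxB hxz using hz
  let e := Fintype.equivFin ι
  refine ⟨Fintype.card ι, fun j => w (e.symm j) • fderiv ℝ F (x (e.symm j)), fun v => ?_,
    fun p hp => ?_⟩
  · rw [Equiv.sum_comp e.symm (fun i => ‖(w i • fderiv ℝ F (x i)) v‖)]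
    calc _ ≤ ∑ i, w i * (D * ‖v‖) := by
          refine Finset.sum_le_sum fun i _ => ?_
          rw [ContinuousLinearMap.smul_apply, norm_smul, Real.norm_eq_abs, abs_of_nonneg (hw0 i)]
          refine mul_le_mul_of_nonneg_left ?_ (hw0 i)
          refine (ContinuousLinearMap.le_opNorm _ _).trans ?_
          refine mul_le_mul_of_nonneg_right (hF1 _ ?_) (norm_nonneg _)
          have := hxB i
          simp only [B, mem_ball_zero_iff] at this
          linarith
      _ = _ := by rw [← Finset.sum_mul, hw1, one_mul]
  · rw [Equiv.sum_comp e.symm (fun i => ‖(w i • fderiv ℝ F (x i)) p‖)]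
    have h1 : ∑ i, ‖(w i • fderiv ℝ F (x i)) p‖ = y ⟨p, hp⟩ := by
      rw [← hwz, Finset.sum_apply]
      refine Finset.sum_congr rfl fun i _ => ?_
      rw [ContinuousLinearMap.smul_apply, norm_smul, Real.norm_eq_abs, abs_of_nonneg (hw0 i),
        Pi.smul_apply, ← hxz i, smul_eq_mul]
    have h2 : (⨍ x in B, Q x ∂μ) ⟨p, hp⟩ =
        (μ.real B)⁻¹ * ∫ x in B, ‖fderiv ℝ F x p‖ ∂μ := by
      rw [setAverage_eq, Pi.smul_apply, smul_eq_mul]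
      congr 1
      exact ((ContinuousLinearMap.proj (R := ℝ) (φ := fun _ : P => ℝ)
        ⟨p, hp⟩).integral_comp_comm hQi).symm
    have h3 := (dist_le_pi_dist (⨍ x in B, Q x ∂μ) y ⟨p, hp⟩).trans_lt hyd
    rw [Real.dist_eq, h2] at h3
    have h4 := havg p hp
    rw [h1]
    have := (abs_lt.1 h3).2
    linarith

/-- Linearization: a bi-Lipschitz map of the unit ball to `L₁` yields a linear map to `ℓ₁`. -/
lemma aux_linearize {E : Type*} [NormedAddCommGroup E] [NormedSpace ℝ E] [FiniteDimensional ℝ E]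
    {Ω : Type*} [MeasurableSpace Ω] (ν : Measure Ω)
    (h : E → Lp ℝ 1 ν) (D : ℝ) (hD : 0 ≤ D)
    (hup : ∀ x y, ‖x‖ ≤ 1 → ‖y‖ ≤ 1 → ‖h x - h y‖ ≤ D * ‖x - y‖)
    (hlow : ∀ x y, ‖x‖ ≤ 1 → ‖y‖ ≤ 1 → ‖x - y‖ ≤ ‖h x - h y‖)
    (ε : ℝ) (hε : 0 < ε) :
    ∃ (m : ℕ) (T : E →ₗ[ℝ] (Fin m → ℝ)), ∀ v,
      (1 - ε) * ‖v‖ ≤ ∑ j, |T v j| ∧ ∑ j, |T v j| ≤ (D + ε) * ‖v‖ := by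
  classical
  obtain ⟨t, hts, htf, htc⟩ := finite_cover_balls_of_compact (isCompact_sphere (0:E) 1)
    (e := ε / 3 / (D + 1)) (by positivity)
  obtain ⟨n, L, hL1, hL2⟩ := aux_convex h D hD hup hlow htf.toFinset
    (fun p hp => by simpa using hts (htf.mem_toFinset.1 hp)) (ε / 3) (by positivity)
  obtain ⟨m, T, hT⟩ := aux_simple_family ν L (ε / 3) (by positivity)
  have hlow1 : ∀ v, ‖v‖ = 1 → 1 - 2 * (ε / 3) ≤ ∑ i, ‖L i v‖ := by
    intro v hv
    have : v ∈ Metric.sphere (0:E) 1 := by simpa using hv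
    obtain ⟨p, hp, hpv⟩ := Set.mem_iUnion₂.1 (htc this)
    rw [mem_ball_iff_norm] at hpv
    have h1 := hL2 p (htf.mem_toFinset.2 hp)
    have h2 := hL1 (v - p)
    have h3 : ∑ i, ‖L i p‖ ≤ ∑ i, ‖L i v‖ + ∑ i, ‖L i (v - p)‖ := by
      rw [← Finset.sum_add_distrib]
      refine Finset.sum_le_sum fun i _ => ?_
      rw [map_sub]
      have := norm_sub_le (L i v) (L i v - L i p)
      simpa using this
    have h4 : D * ‖v - p‖ ≤ ε / 3 := by
      calc _ ≤ (D + 1) * (ε / 3 / (D + 1)) := by gcongr; linarith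
        _ = _ := by field_simp
    linarith
  refine ⟨m, T, fun v => ?_⟩
  have hTv := abs_le.1 (hT v)
  have h2 := hL1 v
  have h3 : (1 - 2 * (ε / 3)) * ‖v‖ ≤ ∑ i, ‖L i v‖ := by
    rcases eq_or_ne v 0 with rfl | hv
    · simp
    · have hv' : 0 < ‖v‖ := norm_pos_iff.2 hv
      have := hlow1 (‖v‖⁻¹ • v) (by rw [norm_smul, norm_inv, norm_norm, inv_mul_cancel₀ hv'.ne'])
      simp only [map_smul, norm_smul, norm_inv, norm_norm, ← Finset.mul_sum] at this
      rw [le_inv_mul_iff₀ hv'] at this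
      linarith
  have := norm_nonneg v
  constructor <;> nlinarith

section TCfacts

variable {X : Type} [Fintype X] [DecidableEq X] [MetricSpace X]

/-- The set of costs of transportation plans. -/
def costSet (μ : X → ℝ) : Set ℝ :=
  { c : ℝ | ∃ (n : ℕ) (a : Fin n → ℝ) (x y : Fin n → X),
    (∀ i, 0 ≤ a i) ∧
    (∀ z : X, μ z = ∑ i, a i * ((if x i = z then (1 : ℝ) else 0) -
      (if y i = z then (1 : ℝ) else 0))) ∧
    c = ∑ i, a i * dist (x i) (y i) }

lemma TCnorm_eq (μ : X → ℝ) : TCnorm dist μ = sInf (costSet μ) := rfl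

lemma costSet_intro {ι : Type*} [Fintype ι] (μ : X → ℝ) (a : ι → ℝ) (x y : ι → X)
    (ha : ∀ i, 0 ≤ a i)
    (h : ∀ z : X, μ z = ∑ i, a i * ((if x i = z then (1 : ℝ) else 0) -
      (if y i = z then (1 : ℝ) else 0))) :
    ∑ i, a i * dist (x i) (y i) ∈ costSet μ := by
  let e := Fintype.equivFin ι
  refine ⟨Fintype.card ι, a ∘ e.symm, x ∘ e.symm, y ∘ e.symm, fun i => ha _, fun z => ?_, ?_⟩
  · rw [h z]
    exact (Equiv.sum_comp e.symm _).symm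
  · exact (Equiv.sum_comp e.symm (fun i => a i * dist (x i) (y i))).symm

lemma costSet_nonneg (μ : X → ℝ) {c : ℝ} (hc : c ∈ costSet μ) : 0 ≤ c := by
  obtain ⟨n, a, x, y, ha, -, rfl⟩ := hc
  exact Finset.sum_nonneg fun i _ => mul_nonneg (ha i) dist_nonneg

lemma costSet_bdd (μ : X → ℝ) : BddBelow (costSet μ) := ⟨0, fun _ hc => costSet_nonneg μ hc⟩

lemma TCnorm_nonneg' (μ : X → ℝ) : 0 ≤ TCnorm dist μ :=
  Real.sInf_nonneg fun _ hc => costSet_nonneg μ hc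

lemma TCnorm_le_of_mem {μ : X → ℝ} {c : ℝ} (hc : c ∈ costSet μ) : TCnorm dist μ ≤ c :=
  csInf_le (costSet_bdd μ) hc

lemma costSet_std (x₀ : X) (μ : X → ℝ) (hμ : ∑ x, μ x = 0) :
    ∑ z, |μ z| * dist (if 0 ≤ μ z then z else x₀) (if 0 ≤ μ z then x₀ else z) ∈ costSet μ := by
  refine costSet_intro μ (fun z => |μ z|) (fun z => if 0 ≤ μ z then z else x₀)
    (fun z => if 0 ≤ μ z then x₀ else z) (fun z => abs_nonneg _) fun z => ?_
  have h1 : ∀ i, |μ i| * ((if (if 0 ≤ μ i then i else x₀) = z then (1 : ℝ) else 0) -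
      (if (if 0 ≤ μ i then x₀ else i) = z then (1 : ℝ) else 0)) =
      μ i * (if i = z then 1 else 0) - μ i * (if x₀ = z then 1 else 0) := by
    intro i
    by_cases hi : 0 ≤ μ i
    · rw [if_pos hi, if_pos hi, abs_of_nonneg hi]; ring
    · rw [if_neg hi, if_neg hi, abs_of_neg (not_le.1 hi)]; ring
  simp only [h1, Finset.sum_sub_distrib, ← Finset.sum_mul, hμ]
  simp

lemma costSet_nonempty (μ : X → ℝ) (hμ : ∑ x, μ x = 0) : (costSet μ).Nonempty := by
  rcases isEmpty_or_nonempty X with hX | ⟨⟨x₀⟩⟩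
  · exact ⟨_, costSet_intro (ι := Fin 0) μ Fin.elim0 Fin.elim0 Fin.elim0 (fun i => i.elim0)
      (fun z => (hX.false z).elim)⟩
  · exact ⟨_, costSet_std x₀ μ hμ⟩

lemma TCnorm_add_le' (μ ν : X → ℝ) (hμ : ∑ x, μ x = 0) (hν : ∑ x, ν x = 0) :
    TCnorm dist (μ + ν) ≤ TCnorm dist μ + TCnorm dist ν := by
  rw [TCnorm_eq μ, TCnorm_eq ν]
  have key : ∀ c ∈ costSet μ, ∀ c' ∈ costSet ν, TCnorm dist (μ + ν) ≤ c + c' := by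
    rintro c ⟨n, a, x, y, ha, h, rfl⟩ c' ⟨n', a', x', y', ha', h', rfl⟩
    have := costSet_intro (ι := Fin n ⊕ Fin n') (μ + ν) (Sum.elim a a') (Sum.elim x x')
      (Sum.elim y y') (by rintro (i | i); exacts [ha i, ha' i])
      (fun z => by
        rw [Pi.add_apply, h z, h' z, Fintype.sum_sum_type]
        rfl)
    have h2 := TCnorm_le_of_mem this
    simpa only [Fintype.sum_sum_type, Sum.elim_inl, Sum.elim_inr] using h2
  have h1 : ∀ c ∈ costSet μ, TCnorm dist (μ + ν) - c ≤ sInf (costSet ν) := fun c hc =>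
    le_csInf (costSet_nonempty ν hν) fun c' hc' => by linarith [key c hc c' hc']
  have h2 : TCnorm dist (μ + ν) - sInf (costSet ν) ≤ sInf (costSet μ) :=
    le_csInf (costSet_nonempty μ hμ) fun c hc => by linarith [h1 c hc]
  linarith

lemma TCnorm_smul_le' (r : ℝ) (μ : X → ℝ) (hμ : ∑ x, μ x = 0) :
    TCnorm dist (r • μ) ≤ |r| * TCnorm dist μ := by
  have key : ∀ c ∈ costSet μ, TCnorm dist (r • μ) ≤ |r| * c := by
    rintro c ⟨n, a, x, y, ha, h, rfl⟩
    have := costSet_intro (ι := Fin n) (r • μ) (fun i => |r| * a i)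
      (fun i => if 0 ≤ r then x i else y i) (fun i => if 0 ≤ r then y i else x i)
      (fun i => mul_nonneg (abs_nonneg _) (ha i))
      (fun z => by
        rw [Pi.smul_apply, smul_eq_mul, h z, Finset.mul_sum]
        refine Finset.sum_congr rfl fun i _ => ?_
        by_cases hr : 0 ≤ r
        · simp only [if_pos hr, abs_of_nonneg hr]; ring
        · simp only [if_neg hr, abs_of_neg (not_le.1 hr)]; ring)
    refine (TCnorm_le_of_mem this).trans (le_of_eq ?_)
    rw [Finset.mul_sum]
    refine Finset.sum_congr rfl fun i _ => ?_
    by_cases hr : 0 ≤ r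
    · simp only [if_pos hr]; ring
    · simp only [if_neg hr]; rw [dist_comm]; ring
  rcases eq_or_ne r 0 with rfl | hr
  · obtain ⟨c, hc⟩ := costSet_nonempty μ hμ
    simpa using key c hc
  · have hr' : 0 < |r| := abs_pos.2 hr
    rw [← div_le_iff₀' hr']
    exact le_csInf (costSet_nonempty μ hμ) fun c hc => (div_le_iff₀' hr').2 (key c hc)

/-- Lower bound for the transportation cost norm. -/
lemma TCnorm_lower (X : Type) [Fintype X] [DecidableEq X] [MetricSpace X] :
    ∃ δ > 0, ∀ μ : X → ℝ, ∑ x, μ x = 0 → ∀ z, δ * |μ z| ≤ TCnorm dist μ := by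
  obtain ⟨δ, hδ, hd⟩ : ∃ δ > 0, ∀ x y : X, x ≠ y → δ ≤ dist x y := by
    rcases isEmpty_or_nonempty {p : X × X // p.1 ≠ p.2} with he | hne
    · exact ⟨1, one_pos, fun x y hxy => (he.false ⟨(x, y), hxy⟩).elim⟩
    · obtain ⟨p, hp⟩ := Finite.exists_min (fun p : {p : X × X // p.1 ≠ p.2} => dist p.1.1 p.1.2)
      exact ⟨_, dist_pos.2 p.2, fun x y hxy => hp ⟨(x, y), hxy⟩⟩
  refine ⟨δ, hδ, fun μ hμ z => le_csInf (costSet_nonempty μ hμ) ?_⟩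
  rintro c ⟨n, a, x, y, ha, h, rfl⟩
  rw [h z]
  calc _ ≤ δ * ∑ i, |a i * ((if x i = z then (1 : ℝ) else 0) - (if y i = z then (1 : ℝ) else 0))| :=
        mul_le_mul_of_nonneg_left (Finset.abs_sum_le_sum_abs _ _) hδ.le
    _ ≤ _ := by
        rw [Finset.mul_sum]
        refine Finset.sum_le_sum fun i _ => ?_
        rw [abs_mul, abs_of_nonneg (ha i)]
        have : δ * |(if x i = z then (1 : ℝ) else 0) - (if y i = z then (1 : ℝ) else 0)| ≤
            dist (x i) (y i) := by
          by_cases hxy : x i = y i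
          · simp [hxy]
          · refine le_trans ?_ (hd _ _ hxy)
            have h1 : |(if x i = z then (1 : ℝ) else 0) - (if y i = z then (1 : ℝ) else 0)| ≤ 1 := by
              split_ifs <;> simp
            nlinarith
        nlinarith [ha i]

/-- Upper bound for the transportation cost norm. -/
lemma TCnorm_upper (X : Type) [Fintype X] [DecidableEq X] [MetricSpace X] :
    ∃ C ≥ 0, ∀ μ : X → ℝ, ∑ x, μ x = 0 → TCnorm dist μ ≤ C * ∑ z, |μ z| := by
  rcases isEmpty_or_nonempty X with hX | ⟨⟨x₀⟩⟩
  · refine ⟨0, le_rfl, fun μ hμ => ?_⟩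
    have := TCnorm_le_of_mem (costSet_intro (ι := Fin 0) μ Fin.elim0 Fin.elim0 Fin.elim0
      (fun i => i.elim0) (fun z => (hX.false z).elim))
    simpa using this
  · refine ⟨∑ z, dist z x₀, by positivity, fun μ hμ => ?_⟩
    refine (TCnorm_le_of_mem (costSet_std x₀ μ hμ)).trans ?_
    rw [Finset.mul_sum]
    refine Finset.sum_le_sum fun z _ => ?_
    rw [mul_comm]
    refine mul_le_mul_of_nonneg_right ?_ (abs_nonneg _)
    refine le_trans (le_of_eq ?_) (Finset.single_le_sum (f := fun z => dist z x₀)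
      (fun i _ => dist_nonneg) (Finset.mem_univ z))
    split_ifs
    · rfl
    · exact dist_comm _ _

end TCfacts

/-- The subspace of functions with total mass zero. -/
def TCsub (X : Type) [Fintype X] : Submodule ℝ (X → ℝ) where
  carrier := {μ | ∑ x, μ x = 0}
  add_mem' := by
    intro a b ha hb
    simp only [Set.mem_setOf_eq, Pi.add_apply, Finset.sum_add_distrib] at *
    rw [ha, hb, add_zero]
  zero_mem' := by simp
  smul_mem' := by
    intro c a ha
    simp only [Set.mem_setOf_eq, Pi.smul_apply, smul_eq_mul, ← Finset.mul_sum] at *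
    rw [ha, mul_zero]

/-- The transportation cost space as a type. -/
def TCsp (X : Type) [Fintype X] : Type := TCsub X

noncomputable section

instance (X : Type) [Fintype X] : AddCommGroup (TCsp X) := inferInstanceAs (AddCommGroup (TCsub X))
instance (X : Type) [Fintype X] : Module ℝ (TCsp X) := inferInstanceAs (Module ℝ (TCsub X))
instance (X : Type) [Fintype X] : Module.Finite ℝ (TCsp X) :=
  inferInstanceAs (Module.Finite ℝ (TCsub X))

instance (X : Type) [Fintype X] [DecidableEq X] [MetricSpace X] : Norm (TCsp X) :=
  ⟨fun μ => TCnorm dist μ.1⟩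

lemma TCsp_norm_def {X : Type} [Fintype X] [DecidableEq X] [MetricSpace X] (μ : TCsp X) :
    ‖μ‖ = TCnorm dist μ.1 := rfl

lemma TCsp_core (X : Type) [Fintype X] [DecidableEq X] [MetricSpace X] :
    NormedSpace.Core ℝ (TCsp X) where
  norm_nonneg μ := TCnorm_nonneg' _
  norm_smul c μ := by
    have hle : ∀ (c : ℝ) (μ : TCsp X), ‖c • μ‖ ≤ |c| * ‖μ‖ := fun c μ =>
      TCnorm_smul_le' c μ.1 μ.2
    rw [Real.norm_eq_abs]
    refine le_antisymm (hle c μ) ?_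
    rcases eq_or_ne c 0 with rfl | hc
    · rw [abs_zero, zero_mul]
      exact TCnorm_nonneg' _
    · have := hle c⁻¹ (c • μ)
      rw [smul_smul, inv_mul_cancel₀ hc, one_smul, abs_inv, le_inv_mul_iff₀ (abs_pos.2 hc)] at this
      exact this
  norm_triangle μ ν := TCnorm_add_le' μ.1 ν.1 μ.2 ν.2
  norm_eq_zero_iff μ := by
    constructor
    · intro h
      obtain ⟨δ, hδ, hl⟩ := TCnorm_lower X
      refine Subtype.ext (funext fun z => ?_)
      have h1 := hl μ.1 μ.2 z
      rw [← TCsp_norm_def, h] at h1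
      have h2 : |μ.1 z| ≤ 0 := by
        by_contra hcon
        have := mul_pos hδ (not_le.1 hcon)
        linarith
      exact abs_nonpos_iff.1 h2
    · rintro rfl
      obtain ⟨C, hC, hu⟩ := TCnorm_upper X
      refine le_antisymm ?_ (TCnorm_nonneg' _)
      have := hu (0 : TCsp X).1 (0 : TCsp X).2
      refine this.trans (le_of_eq ?_)
      have h0 : ∀ z, (0 : TCsp X).1 z = 0 := fun z => rfl
      simp [h0]

instance (X : Type) [Fintype X] [DecidableEq X] [MetricSpace X] : NormedAddCommGroup (TCsp X) :=
  NormedAddCommGroup.ofCore (TCsp_core X)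

instance (X : Type) [Fintype X] [DecidableEq X] [MetricSpace X] : NormedSpace ℝ (TCsp X) :=
  NormedSpace.ofCore (TCsp_core X)

end

/-- Admissible distortions for linear embeddings. -/
def linSet (X : Type) [Fintype X] [DecidableEq X] [MetricSpace X] : Set ℝ :=
  { D : ℝ | 1 ≤ D ∧ ∃ (m : ℕ) (L : (X → ℝ) →ₗ[ℝ] (Fin m → ℝ)),
    (∀ μ ν : X → ℝ, ∑ x, μ x = 0 → ∑ x, ν x = 0 → L μ = L ν → μ = ν) ∧
    ∀ μ : X → ℝ, ∑ x, μ x = 0 →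
      TCnorm dist μ ≤ ∑ j, |L μ j| ∧ ∑ j, |L μ j| ≤ D * TCnorm dist μ }

/-- Admissible distortions for arbitrary embeddings. -/
def distSet {M : Type*} (ρ : M → M → ℝ) : Set ℝ :=
  { D : ℝ | 1 ≤ D ∧ ∃ (Ω : Type) (_ : MeasurableSpace Ω) (ν : Measure Ω)
    (f : M → Lp ℝ 1 ν), ∀ x y : M,
      ρ x y ≤ dist (f x) (f y) ∧ dist (f x) (f y) ≤ D * ρ x y }

lemma linSet_intro (X : Type) [Fintype X] [DecidableEq X] [MetricSpace X] (D : ℝ) (hD : 1 ≤ D)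
    (m : ℕ) (L : (X → ℝ) →ₗ[ℝ] (Fin m → ℝ))
    (h : ∀ μ : X → ℝ, ∑ x, μ x = 0 →
      TCnorm dist μ ≤ ∑ j, |L μ j| ∧ ∑ j, |L μ j| ≤ D * TCnorm dist μ) : D ∈ linSet X := by
  refine ⟨hD, m, L, fun μ ν hμ hν hL => ?_, h⟩
  obtain ⟨δ, hδ, hl⟩ := TCnorm_lower X
  have hs : ∑ x, (μ - ν) x = 0 := by simp [Finset.sum_sub_distrib, hμ, hν]
  have h1 := (h (μ - ν) hs).1
  rw [map_sub, hL, sub_self] at h1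
  simp only [Pi.zero_apply, abs_zero, Finset.sum_const_zero] at h1
  funext z
  have h2 := (hl (μ - ν) hs z).trans h1
  have h3 : |(μ - ν) z| ≤ 0 := by
    by_contra hcon
    have := mul_pos hδ (not_le.1 hcon)
    linarith
  exact sub_eq_zero.1 (abs_nonpos_iff.1 h3)

lemma linSet_nonempty (X : Type) [Fintype X] [DecidableEq X] [MetricSpace X] :
    (linSet X).Nonempty := by
  obtain ⟨δ, hδ, hl⟩ := TCnorm_lower X
  obtain ⟨C, hC, hu⟩ := TCnorm_upper X
  let e := Fintype.equivFin X
  refine ⟨max 1 (C * (Fintype.card X / δ)), linSet_intro X _ (le_max_left _ _) (Fintype.card X)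
    (C • LinearMap.funLeft ℝ ℝ e.symm) fun μ hμ => ?_⟩
  have h1 : ∑ j, |(C • LinearMap.funLeft ℝ ℝ e.symm) μ j| = C * ∑ z, |μ z| := by
    rw [← Equiv.sum_comp e.symm (fun z => |μ z|), Finset.mul_sum]
    refine Finset.sum_congr rfl fun j _ => ?_
    simp [LinearMap.funLeft_apply, abs_mul, abs_of_nonneg hC]
  rw [h1]
  refine ⟨hu μ hμ, ?_⟩
  have h2 : ∑ z, |μ z| ≤ Fintype.card X / δ * TCnorm dist μ := by
    calc _ ≤ ∑ z : X, TCnorm dist μ / δ :=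
          Finset.sum_le_sum fun z _ => (le_div_iff₀' hδ).2 (hl μ hμ z)
      _ = _ := by simp; ring
  calc C * ∑ z, |μ z| ≤ C * (Fintype.card X / δ * TCnorm dist μ) := by gcongr
    _ = C * (Fintype.card X / δ) * TCnorm dist μ := by ring
    _ ≤ _ := mul_le_mul_of_nonneg_right (le_max_right _ _) (TCnorm_nonneg' _)

lemma linSet_subset (X : Type) [Fintype X] [DecidableEq X] [MetricSpace X] :
    linSet X ⊆ distSet (fun μ ν : {μ : X → ℝ // ∑ x, μ x = 0} =>
      TCnorm dist (fun x => μ.1 x - ν.1 x)) := by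
  rintro D ⟨hD, m, L, -, hL⟩
  have hi : ∀ g : Fin m → ℝ, Integrable g (Measure.count : Measure (Fin m)) :=
    fun g => Integrable.of_finite
  refine ⟨hD, Fin m, inferInstance, Measure.count, fun μ => (hi (L μ.1)).toL1 _, fun μ ν => ?_⟩
  have hd : dist ((hi (L μ.1)).toL1 _) ((hi (L ν.1)).toL1 _) =
      ∑ j, |L (fun x => μ.1 x - ν.1 x) j| := by
    rw [dist_eq_norm, ← Integrable.toL1_sub, L1.norm_of_fun_eq_integral_norm, integral_count]
    refine Finset.sum_congr rfl fun j _ => ?_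
    have : (fun x => μ.1 x - ν.1 x) = μ.1 - ν.1 := rfl
    rw [this, map_sub]
    rfl
  rw [hd]
  exact hL _ (by rw [Finset.sum_sub_distrib, μ.2, ν.2, sub_zero])

lemma distSet_TC_subset_EMD (X : Type) [Fintype X] [DecidableEq X] [MetricSpace X] :
    distSet (fun μ ν : {μ : X → ℝ // ∑ x, μ x = 0} =>
      TCnorm dist (fun x => μ.1 x - ν.1 x)) ⊆
    distSet (fun μ ν : {μ : X → ℝ // (∀ x, 0 ≤ μ x) ∧ ∑ x, μ x = 1} =>
      TCnorm dist (fun x => μ.1 x - ν.1 x)) := by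
  rintro D ⟨hD, Ω, mΩ, P, f, hf⟩
  rcases isEmpty_or_nonempty {μ : X → ℝ // (∀ x, 0 ≤ μ x) ∧ ∑ x, μ x = 1} with he | ⟨⟨u⟩⟩
  · exact ⟨hD, Ω, mΩ, P, fun _ => 0, fun x => he.elim x⟩
  · refine ⟨hD, Ω, mΩ, P, fun μ => f ⟨fun x => μ.1 x - u.1 x, by
      rw [Finset.sum_sub_distrib, μ.2.2, u.2.2, sub_self]⟩, fun μ ν => ?_⟩
    have := hf ⟨fun x => μ.1 x - u.1 x, by rw [Finset.sum_sub_distrib, μ.2.2, u.2.2, sub_self]⟩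
      ⟨fun x => ν.1 x - u.1 x, by rw [Finset.sum_sub_distrib, ν.2.2, u.2.2, sub_self]⟩
    simpa only [sub_sub_sub_cancel_right] using this

lemma exists_linSet_le (X : Type) [Fintype X] [DecidableEq X] [MetricSpace X] (D : ℝ)
    (hD : D ∈ distSet (fun μ ν : {μ : X → ℝ // (∀ x, 0 ≤ μ x) ∧ ∑ x, μ x = 1} =>
      TCnorm dist (fun x => μ.1 x - ν.1 x))) (ε : ℝ) (hε : 0 < ε) (hε1 : ε < 1) :
    (D + ε) / (1 - ε) ∈ linSet X := by
  obtain ⟨hD1, Ω, mΩ, P, f, hf⟩ := hD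
  have hε2 : 0 < 1 - ε := by linarith
  have hDε : 1 ≤ (D + ε) / (1 - ε) := by
    rw [one_le_div hε2]; linarith
  rcases isEmpty_or_nonempty X with hX | hX
  · refine linSet_intro X _ hDε 0 0 fun μ hμ => ?_
    obtain ⟨C, hC, hu⟩ := TCnorm_upper X
    have h1 := hu μ hμ
    have h2 := TCnorm_nonneg' μ
    simp only [Finset.univ_eq_empty, Finset.sum_empty, mul_zero] at h1 ⊢
    have h3 : TCnorm dist μ = 0 := le_antisymm h1 h2
    simp [h3]
  obtain ⟨δ, hδ, hl⟩ := TCnorm_lower X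
  have hn : (0:ℝ) < Fintype.card X := by exact_mod_cast Fintype.card_pos
  set r : ℝ := δ / Fintype.card X with hr
  have hr0 : 0 < r := by positivity
  let pt : TCsp X → X → ℝ := fun x z => 1 / Fintype.card X + r * x.1 z
  have hpt : ∀ x : TCsp X, ‖x‖ ≤ 1 → (∀ z, 0 ≤ pt x z) ∧ ∑ z, pt x z = 1 := by
    intro x hx
    constructor
    · intro z
      have h1 : δ * |x.1 z| ≤ 1 := (hl x.1 x.2 z).trans hx
      have h2 : r * |x.1 z| ≤ 1 / Fintype.card X := by
        rw [hr, div_mul_eq_mul_div]; gcongr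
      have h3 : r * -(|x.1 z|) ≤ r * x.1 z := by gcongr; exact neg_abs_le _
      simp only [pt]
      linarith
    · have : ∑ z, x.1 z = 0 := x.2
      simp only [pt, Finset.sum_add_distrib, ← Finset.mul_sum, this]
      simp [hn.ne']
  classical
  let h : TCsp X → Lp ℝ 1 P := fun x =>
    if hx : ‖x‖ ≤ 1 then r⁻¹ • f ⟨pt x, hpt x hx⟩ else 0
  have hh : ∀ x y, ‖x‖ ≤ 1 → ‖y‖ ≤ 1 → ‖x - y‖ ≤ ‖h x - h y‖ ∧ ‖h x - h y‖ ≤ D * ‖x - y‖ := by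
    intro x y hx hy
    simp only [h, dif_pos hx, dif_pos hy]
    rw [← smul_sub, norm_smul, norm_inv, Real.norm_eq_abs, abs_of_pos hr0]
    have h1 := hf ⟨pt x, hpt x hx⟩ ⟨pt y, hpt y hy⟩
    have h2 : TCnorm dist (fun z => pt x z - pt y z) = r * ‖x - y‖ := by
      have e : (fun z => pt x z - pt y z) = (r • (x - y)).1 := by
        funext z
        have : (r • (x - y)).1 z = r * (x.1 z - y.1 z) := rfl
        rw [this]
        simp only [pt]; ring
      rw [e, ← TCsp_norm_def, norm_smul, Real.norm_eq_abs, abs_of_pos hr0]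
    simp only [h2, dist_eq_norm (f _) (f _)] at h1
    rw [le_inv_mul_iff₀ hr0, inv_mul_le_iff₀ hr0]
    exact ⟨h1.1, h1.2.trans (le_of_eq (by ring))⟩
  obtain ⟨m, T, hT⟩ := aux_linearize P h D (by linarith) (fun x y hx hy => (hh x y hx hy).2)
    (fun x y hx hy => (hh x y hx hy).1) ε hε
  let T' : TCsub X →ₗ[ℝ] (Fin m → ℝ) := T
  obtain ⟨L, hL⟩ := LinearMap.exists_extend T'
  refine linSet_intro X _ hDε m ((1 - ε)⁻¹ • L) fun μ hμ => ?_
  let v : TCsp X := ⟨μ, hμ⟩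
  have h1 : L μ = T v := by
    have := LinearMap.congr_fun hL v
    exact this
  have h2 : ∑ j, |((1 - ε)⁻¹ • L) μ j| = (1 - ε)⁻¹ * ∑ j, |T v j| := by
    rw [Finset.mul_sum]
    refine Finset.sum_congr rfl fun j _ => ?_
    rw [LinearMap.smul_apply, Pi.smul_apply, smul_eq_mul, abs_mul, abs_of_pos (inv_pos.2 hε2), h1]
  obtain ⟨h3, h4⟩ := hT v
  have h5 : ‖v‖ = TCnorm dist μ := rfl
  rw [h5] at h3 h4
  rw [h2, le_inv_mul_iff₀ hε2, inv_mul_le_iff₀ hε2]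
  refine ⟨h3, h4.trans (le_of_eq ?_)⟩
  field_simp

lemma c1lin_le (X : Type) [Fintype X] [DecidableEq X] [MetricSpace X] (D : ℝ)
    (hD : D ∈ distSet (fun μ ν : {μ : X → ℝ // (∀ x, 0 ≤ μ x) ∧ ∑ x, μ x = 1} =>
      TCnorm dist (fun x => μ.1 x - ν.1 x))) : sInf (linSet X) ≤ D := by
  have hb : BddBelow (linSet X) := ⟨1, fun _ h => h.1⟩
  have hc : Filter.Tendsto (fun ε : ℝ => (D + ε) / (1 - ε)) (nhdsWithin 0 (Set.Ioi 0))
      (nhds D) := by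
    have : ContinuousAt (fun ε : ℝ => (D + ε) / (1 - ε)) 0 :=
      ContinuousAt.div (by fun_prop) (by fun_prop) (by norm_num)
    have h2 := this.tendsto
    simp only [add_zero, sub_zero, div_one] at h2
    exact h2.mono_left nhdsWithin_le_nhds
  refine ge_of_tendsto hc ?_
  have h2 : ∀ᶠ s in nhds (0:ℝ), s < 1 := gt_mem_nhds (by norm_num)
  filter_upwards [h2.filter_mono nhdsWithin_le_nhds, self_mem_nhdsWithin] with ε h1 h0
  exact csInf_le hb (exists_linSet_le X D hD ε h0 h1)

/-- For every finite metric space `X`,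
`c₁(EMD(X)) = c₁(TC(X)) = c_{1,lin}(TC(X))`. -/
theorem c1_EMD_eq_c1_TC_eq_c1lin (X : Type) [Fintype X] [DecidableEq X] [MetricSpace X] :
    c1EMD X = c1TC (dist : X → X → ℝ) ∧
    c1TC (dist : X → X → ℝ) = c1linTC X := by
  have e1 : c1EMD X = sInf (distSet (fun μ ν : {μ : X → ℝ // (∀ x, 0 ≤ μ x) ∧ ∑ x, μ x = 1} =>
      TCnorm dist (fun x => μ.1 x - ν.1 x))) := rfl
  have e2 : c1TC (dist : X → X → ℝ) = sInf (distSet (fun μ ν : {μ : X → ℝ // ∑ x, μ x = 0} =>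
      TCnorm dist (fun x => μ.1 x - ν.1 x))) := rfl
  have e3 : c1linTC X = sInf (linSet X) := rfl
  have hne := linSet_nonempty X
  have hs1 := linSet_subset X
  have hs2 := distSet_TC_subset_EMD X
  have i1 : c1TC (dist : X → X → ℝ) ≤ c1linTC X := by
    rw [e2, e3]
    exact csInf_le_csInf ⟨1, fun _ h => h.1⟩ hne hs1
  have i2 : c1EMD X ≤ c1TC (dist : X → X → ℝ) := by
    rw [e1, e2]
    exact csInf_le_csInf ⟨1, fun _ h => h.1⟩ (hne.mono hs1) hs2
  have i3 : c1linTC X ≤ c1EMD X := by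
    rw [e1, e3]
    exact le_csInf ((hne.mono hs1).mono hs2) fun D hD => c1lin_le X D hD
  exact ⟨le_antisymm i2 (i1.trans i3), le_antisymm i1 (i3.trans i2)⟩
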